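/- The family {S_w}_{w ∈ S_n} is a basis of R ⊗_{R^{S_n}} R as a free left R-module. -/

import Mathlib

open MvPolynomial

noncomputable section

/-- `R n` is the polynomial ring `ℂ[x_1, …, x_n]`. -/
abbrev R (n : ℕ) := MvPolynomial (Fin n) ℂ

/-- The inversion set of a permutation. -/
def invSet (n : ℕ) (w : Equiv.Perm (Fin n)) : Finset (Fin n × Fin n) :=
  Finset.univ.filter fun p => p.1 < p.2 ∧ w p.2 < w p.1

/-- The Coxeter length of a permutation, i.e. its number of inversions. -/
def len (n : ℕ) (w : Equiv.Perm (Fin n)) : ℕ := (invSet n w).card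

/-- `Δ_w = ∏_{(i,j) ∈ inv(w)} (x_i - x_j)`. -/
def Δpoly (n : ℕ) (w : Equiv.Perm (Fin n)) : R n :=
  ∏ p ∈ invSet n w, (X p.1 - X p.2)

/-- The simple reflection `s_j = (j, j+1)` (1-based `j` corresponds to 0-based index here);
for out-of-range indices we use the identity. -/
def simpleRefl (n : ℕ) (j : ℕ) : Equiv.Perm (Fin n) :=
  if hj : j + 1 < n then Equiv.swap ⟨j, Nat.lt_of_succ_lt hj⟩ ⟨j + 1, hj⟩ else 1

open Classical in
/-- The Demazure operator `∂_j = (id - s_j)/(x_j - x_{j+1})` on `R n`. -/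
def demX (n : ℕ) (j : ℕ) (h : R n) : R n :=
  if hj : j + 1 < n then
    let a : Fin n := ⟨j, Nat.lt_of_succ_lt hj⟩
    let b : Fin n := ⟨j + 1, hj⟩
    if hd : (X a - X b : R n) ∣ (h - rename (Equiv.swap a b) h) then hd.choose else 0
  else 0

/-- Composite Demazure operator along a word `[a_1, …, a_k]`:
`∂_{a_1} ∘ ⋯ ∘ ∂_{a_k}`. -/
def demWord (n : ℕ) (l : List ℕ) (h : R n) : R n := l.foldr (demX n) h

/-- `l` is a reduced word for `w`: `w = s_{a_1} ⋯ s_{a_k}` with `k = ℓ(w)`. -/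
def IsReducedWord (n : ℕ) (w : Equiv.Perm (Fin n)) (l : List ℕ) : Prop :=
  (l.map (simpleRefl n)).prod = w ∧ l.length = len n w

open Classical in
/-- The Demazure operator `∂_w` of a permutation, computed from a (choice of) reduced word;
it is independent of this choice. -/
def dem (n : ℕ) (w : Equiv.Perm (Fin n)) : R n → R n :=
  if h : ∃ l, IsReducedWord n w l then demWord n h.choose else id

/-- The longest element `w_0` of `S_n`. -/
def w₀ (n : ℕ) : Equiv.Perm (Fin n) := Fin.revPerm

/-- The staircase monomial `x_1^{n-1} x_2^{n-2} ⋯ x_{n-1}`. -/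
def staircase (n : ℕ) : R n := ∏ i : Fin n, X i ^ (n - 1 - (i : ℕ))

/-- The Schubert polynomial `𝔖_w(x) = ∂_{w⁻¹ w₀}(x_1^{n-1} ⋯ x_{n-1})`. -/
def schubert (n : ℕ) (w : Equiv.Perm (Fin n)) : R n := dem n (w⁻¹ * w₀ n) (staircase n)



open TensorProduct

/-- The subalgebra `R^{S_n} ⊆ R` of symmetric polynomials. -/
abbrev Ssub (n : ℕ) := MvPolynomial.symmetricSubalgebra (Fin n) ℂ

/-- The tensor product `R ⊗_{R^{S_n}} R`. -/
abbrev T (n : ℕ) := TensorProduct (Ssub n) (R n) (R n)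

/-- `rename w` as an `R^{S_n}`-algebra endomorphism of `R`. -/
def renameS (n : ℕ) (w : Equiv.Perm (Fin n)) : R n →ₐ[Ssub n] R n :=
  { (rename ⇑w : R n →ₐ[ℂ] R n) with
    commutes' := fun s => s.2 w }

/-- `F_w : R ⊗_{R^{S_n}} R → R_w`, the `R`-bimodule homomorphism `f ⊗ g ↦ f · (w·g)`
(the target `R_w` has underlying abelian group `R`). -/
def Fw (n : ℕ) (w : Equiv.Perm (Fin n)) : T n →ₐ[Ssub n] R n :=
  Algebra.TensorProduct.productMap (AlgHom.id (Ssub n) (R n)) (renameS n w)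

open Classical in
/-- `S_w = 1 ⊗ 𝔖_w(x) + Σ 𝔖_v(-x) ⊗ 𝔖_u(x)`, the sum over all factorizations `w = v⁻¹ u`
with `ℓ(u) < ℓ(w)` and `ℓ(w) = ℓ(v) + ℓ(u)`. -/
def Sw (n : ℕ) (w : Equiv.Perm (Fin n)) : T n :=
  (1 : R n) ⊗ₜ[Ssub n] schubert n w +
  ∑ p ∈ Finset.univ.filter
      (fun p : Equiv.Perm (Fin n) × Equiv.Perm (Fin n) =>
        w = p.2⁻¹ * p.1 ∧ len n p.1 < len n w ∧ len n w = len n p.2 + len n p.1),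
    (aeval (fun i => -(X i : R n)) (schubert n p.2)) ⊗ₜ[Ssub n] schubert n p.1



/-! ### Combinatorics of length -/

lemma mem_invSet {n : ℕ} {w : Equiv.Perm (Fin n)} {p : Fin n × Fin n} :
    p ∈ invSet n w ↔ p.1 < p.2 ∧ w p.2 < w p.1 := by
  simp [invSet]

lemma simpleRefl_mul_self (n j : ℕ) : simpleRefl n j * simpleRefl n j = 1 := by
  unfold simpleRefl
  split_ifs <;> simp

lemma simpleRefl_mul_cancel (n j : ℕ) (w : Equiv.Perm (Fin n)) :
    simpleRefl n j * (simpleRefl n j * w) = w := by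
  rw [← mul_assoc, simpleRefl_mul_self, one_mul]

lemma simpleRefl_of_lt {n j : ℕ} (hj : j + 1 < n) :
    simpleRefl n j = Equiv.swap ⟨j, Nat.lt_of_succ_lt hj⟩ ⟨j + 1, hj⟩ := by
  simp [simpleRefl, hj]

lemma simpleRefl_of_not_lt {n j : ℕ} (hj : ¬ j + 1 < n) : simpleRefl n j = 1 := by
  simp [simpleRefl, hj]

/-- Simple reflections preserve the order of all pairs but one. -/
lemma swap_lt_iff {n j : ℕ} (hj : j + 1 < n) (x y : Fin n)
    (h : ¬ (x = ⟨j, Nat.lt_of_succ_lt hj⟩ ∧ y = ⟨j + 1, hj⟩))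
    (h' : ¬ (y = ⟨j, Nat.lt_of_succ_lt hj⟩ ∧ x = ⟨j + 1, hj⟩)) :
    (simpleRefl n j x < simpleRefl n j y ↔ x < y) := by
  rw [simpleRefl_of_lt hj]
  obtain ⟨x, hx⟩ := x
  obtain ⟨y, hy⟩ := y
  simp only [Fin.mk.injEq] at h h'
  rw [Equiv.swap_apply_def, Equiv.swap_apply_def]
  simp only [Fin.mk.injEq]
  split_ifs <;> simp only [Fin.mk_lt_mk] <;> omega

lemma len_simple_mul_up {n j : ℕ} (hj : j + 1 < n) (w : Equiv.Perm (Fin n))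
    (h : w⁻¹ ⟨j, Nat.lt_of_succ_lt hj⟩ < w⁻¹ ⟨j + 1, hj⟩) :
    len n (simpleRefl n j * w) = len n w + 1 := by
  unfold len
  have key : invSet n (simpleRefl n j * w) =
      insert (w⁻¹ ⟨j, Nat.lt_of_succ_lt hj⟩, w⁻¹ ⟨j + 1, hj⟩) (invSet n w) := by
    ext ⟨p, q⟩
    rw [Finset.mem_insert, mem_invSet, mem_invSet]
    simp only [Prod.mk.injEq, Equiv.Perm.mul_apply]
    by_cases h1 : w p = ⟨j, Nat.lt_of_succ_lt hj⟩ ∧ w q = ⟨j + 1, hj⟩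
    · have hp : p = w⁻¹ ⟨j, Nat.lt_of_succ_lt hj⟩ := by rw [← h1.1]; simp
      have hq : q = w⁻¹ ⟨j + 1, hj⟩ := by rw [← h1.2]; simp
      rw [h1.1, h1.2, ← hp, ← hq]
      rw [← hp, ← hq] at h
      simp [h, simpleRefl_of_lt hj]
    · by_cases h2 : w q = ⟨j, Nat.lt_of_succ_lt hj⟩ ∧ w p = ⟨j + 1, hj⟩
      · have hp : q = w⁻¹ ⟨j, Nat.lt_of_succ_lt hj⟩ := by rw [← h2.1]; simp
        have hq : p = w⁻¹ ⟨j + 1, hj⟩ := by rw [← h2.2]; simp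
        rw [← hp, ← hq] at h
        rw [← hp, ← hq]
        have := h.ne
        have h3 := h.not_gt
        simp [h3, this]
      · rw [swap_lt_iff hj _ _ h2 h1]
        constructor
        · intro h; exact Or.inr h
        · rintro (⟨h3, h4⟩ | h3)
          · exfalso; apply h1; subst h3; subst h4; simp
          · exact h3
  rw [key, Finset.card_insert_of_notMem]
  rw [mem_invSet]
  simp

lemma len_simple_mul_down {n j : ℕ} (hj : j + 1 < n) (w : Equiv.Perm (Fin n))
    (h : w⁻¹ ⟨j + 1, hj⟩ < w⁻¹ ⟨j, Nat.lt_of_succ_lt hj⟩) :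
    len n w = len n (simpleRefl n j * w) + 1 := by
  have := len_simple_mul_up hj (simpleRefl n j * w) (by
    rw [simpleRefl_of_lt hj]; simpa using h)
  rwa [simpleRefl_mul_cancel] at this

lemma lt_or_lt_desc {n j : ℕ} (hj : j + 1 < n) (w : Equiv.Perm (Fin n)) :
    w⁻¹ ⟨j, Nat.lt_of_succ_lt hj⟩ < w⁻¹ ⟨j + 1, hj⟩ ∨
    w⁻¹ ⟨j + 1, hj⟩ < w⁻¹ ⟨j, Nat.lt_of_succ_lt hj⟩ := by
  rcases lt_trichotomy (w⁻¹ ⟨j, Nat.lt_of_succ_lt hj⟩) (w⁻¹ ⟨j + 1, hj⟩) with h | h | h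
  · exact Or.inl h
  · simp at h
  · exact Or.inr h

lemma len_simple_mul_le (n j : ℕ) (w : Equiv.Perm (Fin n)) :
    len n (simpleRefl n j * w) ≤ len n w + 1 := by
  by_cases hj : j + 1 < n
  · rcases lt_or_lt_desc hj w with h | h
    · rw [len_simple_mul_up hj w h]
    · have := len_simple_mul_down hj w h; omega
  · rw [simpleRefl_of_not_lt hj, one_mul]; omega

lemma len_one (n : ℕ) : len n 1 = 0 := by
  unfold len
  rw [Finset.card_eq_zero]
  ext ⟨p, q⟩
  simp only [mem_invSet, Equiv.Perm.coe_one, id_eq, Finset.notMem_empty, iff_false, not_and, not_lt]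
  exact fun h => h.le

lemma len_word_le (n : ℕ) (l : List ℕ) : len n (l.map (simpleRefl n)).prod ≤ l.length := by
  induction l with
  | nil => simp [len_one]
  | cons i l ih =>
    have := len_simple_mul_le n i (l.map (simpleRefl n)).prod
    simp only [List.map_cons, List.prod_cons, List.length_cons]
    omega

lemma strictMono_perm_eq_one {n : ℕ} (w : Equiv.Perm (Fin n)) (h : StrictMono w) : w = 1 := by
  have : (StrictMono.orderIsoOfSurjective w h w.surjective) = OrderIso.refl (Fin n) :=
    Subsingleton.elim _ _
  ext x
  have := congrArg (fun f => f x) this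
  simpa using congrArg Fin.val this

lemma exists_descent {n : ℕ} (w : Equiv.Perm (Fin n)) (hw : w ≠ 1) :
    ∃ (j : ℕ) (hj : j + 1 < n),
      w⁻¹ ⟨j + 1, hj⟩ < w⁻¹ ⟨j, Nat.lt_of_succ_lt hj⟩ := by
  by_contra hcon
  push Not at hcon
  apply hw
  have : w⁻¹ = 1 := by
    apply strictMono_perm_eq_one
    cases n with
    | zero => intro a; exact a.elim0
    | succ m =>
      rw [Fin.strictMono_iff_lt_succ]
      intro i
      have hj : (i : ℕ) + 1 < m + 1 := by omega
      rcases lt_or_lt_desc hj w with h | h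
      · exact h
      · exact absurd h (not_lt.mpr (hcon i hj))
  simpa using this

lemma exists_reducedWord (n : ℕ) (w : Equiv.Perm (Fin n)) : ∃ l, IsReducedWord n w l := by
  induction hk : len n w generalizing w with
  | zero =>
    by_cases hw : w = 1
    · exact ⟨[], by simp [IsReducedWord, hw, len_one]⟩
    · obtain ⟨j, hj, h⟩ := exists_descent w hw
      have := len_simple_mul_down hj w h
      omega
  | succ k ih =>
    by_cases hw : w = 1
    · rw [hw, len_one] at hk; omega
    · obtain ⟨j, hj, h⟩ := exists_descent w hw
      have := len_simple_mul_down hj w h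
      obtain ⟨l, hl, hl'⟩ := ih (simpleRefl n j * w) (by omega)
      refine ⟨j :: l, ?_, ?_⟩
      · simp [hl, simpleRefl_mul_cancel]
      · simp only [List.length_cons]; omega

lemma IsReducedWord.tail {n : ℕ} {w : Equiv.Perm (Fin n)} {i : ℕ} {l : List ℕ}
    (h : IsReducedWord n w (i :: l)) :
    IsReducedWord n (simpleRefl n i * w) l ∧ len n w = len n (simpleRefl n i * w) + 1 ∧
      i + 1 < n := by
  obtain ⟨h1, h2⟩ := h
  simp only [List.map_cons, List.prod_cons, List.length_cons] at h1 h2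
  have h3 : simpleRefl n i * w = (l.map (simpleRefl n)).prod := by
    rw [← h1, simpleRefl_mul_cancel]
  have h4 := len_word_le n l
  rw [← h3] at h4
  have h5 := len_simple_mul_le n i (simpleRefl n i * w)
  rw [simpleRefl_mul_cancel] at h5
  refine ⟨⟨h3.symm, by omega⟩, by omega, ?_⟩
  by_contra hi
  rw [simpleRefl_of_not_lt hi, one_mul] at h4
  omega

lemma IsReducedWord.cons {n : ℕ} {w : Equiv.Perm (Fin n)} {i : ℕ} {l : List ℕ}
    (h : IsReducedWord n (simpleRefl n i * w) l) (h' : len n w = len n (simpleRefl n i * w) + 1) :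
    IsReducedWord n w (i :: l) := by
  refine ⟨?_, ?_⟩
  · simp [h.1, simpleRefl_mul_cancel]
  · simp [h.2, h']

lemma desc_of_len {n j : ℕ} (hj : j + 1 < n) (w : Equiv.Perm (Fin n))
    (h : len n w = len n (simpleRefl n j * w) + 1) :
    w⁻¹ ⟨j + 1, hj⟩ < w⁻¹ ⟨j, Nat.lt_of_succ_lt hj⟩ := by
  rcases lt_or_lt_desc hj w with h1 | h1
  · have := len_simple_mul_up hj w h1; omega
  · exact h1

/-! ### The longest element -/

lemma len_compl (n : ℕ) (w : Equiv.Perm (Fin n)) :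
    len n (w⁻¹ * w₀ n) + len n w = len n (w₀ n) := by
  have h1 : len n (w⁻¹ * w₀ n) =
      (Finset.univ.filter fun p : Fin n × Fin n => p.1 < p.2 ∧ w p.1 < w p.2).card := by
    unfold len
    refine Finset.card_bij (fun p _ => (w⁻¹ p.2.rev, w⁻¹ p.1.rev)) ?_ ?_ ?_
    · rintro ⟨p, q⟩ h
      simpa [mem_invSet, w₀, and_comm] using h
    · rintro ⟨p, q⟩ _ ⟨p', q'⟩ _ h
      simpa [and_comm] using h
    · rintro ⟨p, q⟩ h
      refine ⟨((w q).rev, (w p).rev), ?_, ?_⟩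
      · simpa [mem_invSet, w₀, and_comm] using h
      · simp
  have h2 : len n (w₀ n) = (Finset.univ.filter fun p : Fin n × Fin n => p.1 < p.2).card := by
    unfold len invSet
    congr 1
    ext ⟨p, q⟩
    simp [w₀]
  rw [h1, h2, len, invSet, ← Finset.card_union_of_disjoint]
  · congr 1
    ext ⟨p, q⟩
    simp only [Finset.mem_union, Finset.mem_filter, Finset.mem_univ, true_and]
    constructor
    · rintro (h | h) <;> exact h.1
    · intro h
      rcases lt_trichotomy (w p) (w q) with h' | h' | h'
      · exact Or.inl ⟨h, h'⟩
      · exact absurd (w.injective h') h.ne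
      · exact Or.inr ⟨h, h'⟩
  · rw [Finset.disjoint_left]
    rintro ⟨p, q⟩ h h'
    simp only [Finset.mem_filter, Finset.mem_univ, true_and] at h h'
    exact lt_asymm h.2 h'.2

lemma len_le_w₀ (n : ℕ) (w : Equiv.Perm (Fin n)) : len n w ≤ len n (w₀ n) := by
  have := len_compl n w; omega

lemma len_eq_zero {n : ℕ} {w : Equiv.Perm (Fin n)} (h : len n w = 0) : w = 1 := by
  by_contra hw
  obtain ⟨j, hj, h1⟩ := exists_descent w hw
  have := len_simple_mul_down hj w h1
  omega

lemma eq_w₀_of_len {n : ℕ} {w : Equiv.Perm (Fin n)} (h : len n w = len n (w₀ n)) :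
    w = w₀ n := by
  have := len_compl n w
  have h1 : w⁻¹ * w₀ n = 1 := len_eq_zero (by omega)
  exact inv_mul_eq_one.mp h1

lemma len_w₀ (n : ℕ) : len n (w₀ n) = ∑ i : Fin n, (n - 1 - (i : ℕ)) := by
  have h2 : len n (w₀ n) = (Finset.univ.filter fun p : Fin n × Fin n => p.1 < p.2).card := by
    unfold len invSet
    congr 1
    ext ⟨p, q⟩
    simp [w₀]
  rw [h2, Finset.card_filter, Fintype.sum_prod_type]
  refine Finset.sum_congr rfl fun i _ => ?_
  rw [← Finset.card_filter]
  have : (Finset.univ.filter fun q : Fin n => i < q) = Finset.Ioi i := by ext; simp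
  rw [this, Fin.card_Ioi]

/-! ### Demazure operators -/

lemma demX_dvd {n : ℕ} (a b : Fin n) (h : R n) :
    (X a - X b : R n) ∣ (h - rename (Equiv.swap a b) h) := by
  induction h using MvPolynomial.induction_on with
  | C r => simp
  | add p q hp hq =>
    have : p + q - rename (Equiv.swap a b) (p + q) =
      (p - rename (Equiv.swap a b) p) + (q - rename (Equiv.swap a b) q) := by
      rw [map_add]; ring
    rw [this]; exact dvd_add hp hq
  | mul_X p i hp =>
    have : p * X i - rename (Equiv.swap a b) (p * X i) =
      (p - rename (Equiv.swap a b) p) * X i +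
        rename (Equiv.swap a b) p * (X i - X (Equiv.swap a b i)) := by
      rw [map_mul, rename_X]; ring
    rw [this]
    refine dvd_add (hp.mul_right _) (Dvd.dvd.mul_left ?_ _)
    rw [Equiv.swap_apply_def]
    split_ifs with h1 h2
    · subst h1; exact dvd_rfl
    · subst h2
      exact ⟨-1, by ring⟩
    · simp

lemma demX_spec {n j : ℕ} (hj : j + 1 < n) (h : R n) :
    (X ⟨j, Nat.lt_of_succ_lt hj⟩ - X ⟨j + 1, hj⟩) * demX n j h =
      h - rename (Equiv.swap (⟨j, Nat.lt_of_succ_lt hj⟩ : Fin n) ⟨j + 1, hj⟩) h := by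
  have hd := demX_dvd (⟨j, Nat.lt_of_succ_lt hj⟩ : Fin n) ⟨j + 1, hj⟩ h
  unfold demX
  simp only [hj, hd, dif_pos]
  exact hd.choose_spec.symm

lemma demX_of_not_lt {n j : ℕ} (hj : ¬ j + 1 < n) (h : R n) : demX n j h = 0 := by
  simp [demX, hj]

lemma X_sub_X_ne {n : ℕ} {a b : Fin n} (h : a ≠ b) : (X a - X b : R n) ≠ 0 := by
  rw [sub_ne_zero]
  exact fun h' => h (X_injective h')

lemma root_ne {n j : ℕ} (hj : j + 1 < n) :
    (X ⟨j, Nat.lt_of_succ_lt hj⟩ - X ⟨j + 1, hj⟩ : R n) ≠ 0 :=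
  X_sub_X_ne (by simp)

lemma demX_eq_of {n j : ℕ} (hj : j + 1 < n) (h g : R n)
    (H : (X ⟨j, Nat.lt_of_succ_lt hj⟩ - X ⟨j + 1, hj⟩) * g =
      h - rename (Equiv.swap (⟨j, Nat.lt_of_succ_lt hj⟩ : Fin n) ⟨j + 1, hj⟩) h) :
    demX n j h = g :=
  mul_left_cancel₀ (root_ne hj) ((demX_spec hj h).trans H.symm)

lemma demX_add (n j : ℕ) (f g : R n) : demX n j (f + g) = demX n j f + demX n j g := by
  by_cases hj : j + 1 < n
  · apply demX_eq_of hj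
    rw [mul_add, demX_spec, demX_spec, map_add]; ring
  · simp [demX_of_not_lt hj]

lemma demX_smul (n j : ℕ) (c : Ssub n) (f : R n) : demX n j (c • f) = c • demX n j f := by
  by_cases hj : j + 1 < n
  · apply demX_eq_of hj
    have hc := c.2 (Equiv.swap (⟨j, Nat.lt_of_succ_lt hj⟩ : Fin n) ⟨j + 1, hj⟩)
    simp only [Algebra.smul_def, map_mul]
    rw [mul_left_comm, demX_spec]
    change (c : R n) * _ = (c : R n) * _ - rename _ (c : R n) * _
    rw [hc]; ring
  · simp [demX_of_not_lt hj]

lemma rename_swap_swap {n : ℕ} (a b : Fin n) (f : R n) :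
    rename (Equiv.swap a b) (rename (Equiv.swap a b) f) = f := by
  rw [rename_rename]
  have : (Equiv.swap a b : Fin n → Fin n) ∘ (Equiv.swap a b) = id := by
    ext x; simp
  rw [this, rename_id_apply]

lemma demX_demX (n j : ℕ) (f : R n) : demX n j (demX n j f) = 0 := by
  by_cases hj : j + 1 < n
  · apply demX_eq_of hj
    have h1 := demX_spec hj f
    have h2 := congrArg (rename (Equiv.swap (⟨j, Nat.lt_of_succ_lt hj⟩ : Fin n) ⟨j + 1, hj⟩)) h1
    rw [map_mul, map_sub, map_sub, rename_swap_swap, rename_X, rename_X, Equiv.swap_apply_left,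
      Equiv.swap_apply_right] at h2
    apply mul_left_cancel₀ (root_ne hj)
    linear_combination -h1 - h2
  · simp [demX_of_not_lt hj]

lemma dem_comm_aux {n : ℕ} {a b c d : Fin n} (hac : a ≠ c) (had : a ≠ d) (hbc : b ≠ c)
    (hbd : b ≠ d) (hab : a ≠ b) (hcd : c ≠ d) {h h1 h2 k1 k2 : R n}
    (E1 : (X a - X b) * h1 = h - rename (Equiv.swap a b) h)
    (E2 : (X c - X d) * h2 = h1 - rename (Equiv.swap c d) h1)
    (F1 : (X c - X d) * k1 = h - rename (Equiv.swap c d) h)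
    (F2 : (X a - X b) * k2 = k1 - rename (Equiv.swap a b) k1) : h2 = k2 := by
  have tE1 := congrArg (rename (Equiv.swap c d)) E1
  have sF1 := congrArg (rename (Equiv.swap a b)) F1
  rw [map_mul, map_sub, map_sub, rename_X, rename_X,
    Equiv.swap_apply_of_ne_of_ne hac had, Equiv.swap_apply_of_ne_of_ne hbc hbd,
    rename_rename] at tE1
  rw [map_mul, map_sub, map_sub, rename_X, rename_X,
    Equiv.swap_apply_of_ne_of_ne hac.symm hbc.symm,
    Equiv.swap_apply_of_ne_of_ne had.symm hbd.symm, rename_rename] at sF1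
  have comm : (Equiv.swap c d : Fin n → Fin n) ∘ (Equiv.swap a b) =
      (Equiv.swap a b) ∘ (Equiv.swap c d) := by
    ext x
    simp only [Function.comp_apply, Equiv.swap_apply_def]
    split_ifs <;> simp_all
  rw [comm] at tE1
  apply mul_left_cancel₀ (X_sub_X_ne hab)
  apply mul_left_cancel₀ (X_sub_X_ne hcd)
  linear_combination (X a - X b) * E2 + E1 - tE1 - (X c - X d) * F2 - F1 + sF1

lemma dem_braid_half {n : ℕ} {a b c : Fin n} (hab : a ≠ b) (hac : a ≠ c) (hbc : b ≠ c)
    {h h1 h2 h3 : R n}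
    (E1 : (X a - X b) * h1 = h - rename (Equiv.swap a b) h)
    (E2 : (X b - X c) * h2 = h1 - rename (Equiv.swap b c) h1)
    (E3 : (X a - X b) * h3 = h2 - rename (Equiv.swap a b) h2) :
    (X a - X b) * (X b - X c) * (X a - X c) * h3 =
      h - rename (Equiv.swap a b) h - rename (Equiv.swap b c) h
        + rename (Equiv.swap a b) (rename (Equiv.swap b c) h)
        + rename (Equiv.swap b c) (rename (Equiv.swap a b) h)
        - rename (Equiv.swap a c) h := by
  have tE1 := congrArg (rename (Equiv.swap b c)) E1
  have sE1 := congrArg (rename (Equiv.swap a b)) E1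
  have sE2 := congrArg (rename (Equiv.swap a b)) E2
  have stE1 := congrArg (rename (Equiv.swap a b)) tE1
  have w : rename (Equiv.swap a b) (rename (Equiv.swap b c) (rename (Equiv.swap a b) h)) =
      rename (Equiv.swap a c) h := by
    rw [rename_rename, rename_rename]
    congr 1
    congr 1
    ext x
    simp only [Function.comp_apply, Equiv.swap_apply_def]
    split_ifs <;> simp_all
  simp only [map_mul, map_sub, rename_X, Equiv.swap_apply_left, Equiv.swap_apply_right,
    Equiv.swap_apply_of_ne_of_ne hab hac, Equiv.swap_apply_of_ne_of_ne hac.symm hbc.symm,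
    rename_swap_swap, w] at tE1 sE1 sE2 stE1
  apply mul_left_cancel₀ (X_sub_X_ne hab)
  linear_combination (X a - X b) * (X b - X c) * (X a - X c) * E3
    + (X a - X b) * (X a - X c) * E2 + (X a - X c) * E1 - (X a - X b) * tE1
    - (X a - X b) * (X b - X c) * sE2 + (X b - X c) * sE1 + (X a - X b) * stE1

lemma dem_braid_aux {n : ℕ} {a b c : Fin n} (hab : a ≠ b) (hac : a ≠ c) (hbc : b ≠ c)
    {h h1 h2 h3 k1 k2 k3 : R n}
    (E1 : (X a - X b) * h1 = h - rename (Equiv.swap a b) h)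
    (E2 : (X b - X c) * h2 = h1 - rename (Equiv.swap b c) h1)
    (E3 : (X a - X b) * h3 = h2 - rename (Equiv.swap a b) h2)
    (F1 : (X b - X c) * k1 = h - rename (Equiv.swap b c) h)
    (F2 : (X a - X b) * k2 = k1 - rename (Equiv.swap a b) k1)
    (F3 : (X b - X c) * k3 = k2 - rename (Equiv.swap b c) k2) : h3 = k3 := by
  have H := dem_braid_half hab hac hbc E1 E2 E3
  have K := dem_braid_half (a := c) (b := b) (c := a) (h := h) (h1 := -k1) (h2 := k2) (h3 := -k3)
    hbc.symm hac.symm hab.symm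
    (by rw [Equiv.swap_comm c b]; linear_combination F1)
    (by rw [Equiv.swap_comm b a, map_neg]; linear_combination -F2)
    (by rw [Equiv.swap_comm c b]; linear_combination F3)
  rw [Equiv.swap_comm c b, Equiv.swap_comm b a, Equiv.swap_comm c a] at K
  apply mul_left_cancel₀ (mul_ne_zero (mul_ne_zero (X_sub_X_ne hab) (X_sub_X_ne hbc))
    (X_sub_X_ne hac))
  linear_combination H - K

lemma demX_comm {n i j : ℕ} (hi : i + 1 < n) (hj : j + 1 < n) (hij : i + 1 < j) (f : R n) :
    demX n i (demX n j f) = demX n j (demX n i f) := by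
  refine dem_comm_aux ?_ ?_ ?_ ?_ ?_ ?_ (demX_spec hj f) (demX_spec hi _) (demX_spec hi f)
    (demX_spec hj _) <;> simp <;> omega

lemma demX_braid {n i : ℕ} (hi : i + 1 + 1 < n) (f : R n) :
    demX n i (demX n (i + 1) (demX n i f)) =
      demX n (i + 1) (demX n i (demX n (i + 1) f)) := by
  have hi' : i + 1 < n := by omega
  refine dem_braid_aux ?_ ?_ ?_ (demX_spec hi' f) (demX_spec hi _) (demX_spec hi' _)
    (demX_spec hi f) (demX_spec hi' _) (demX_spec hi _) <;> simp <;> omega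

lemma simpleRefl_comm {n i j : ℕ} (hi : i + 1 < n) (hj : j + 1 < n) (hij : i + 1 < j) :
    simpleRefl n i * simpleRefl n j = simpleRefl n j * simpleRefl n i := by
  rw [simpleRefl_of_lt hi, simpleRefl_of_lt hj]
  ext ⟨x, hx⟩
  simp only [Equiv.Perm.mul_apply, Equiv.swap_apply_def, Fin.ext_iff, apply_ite Fin.val]
  split_ifs <;> omega

lemma simpleRefl_braid {n i : ℕ} (hi : i + 1 + 1 < n) :
    simpleRefl n i * simpleRefl n (i + 1) * simpleRefl n i =
      simpleRefl n (i + 1) * simpleRefl n i * simpleRefl n (i + 1) := by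
  have hi' : i + 1 < n := by omega
  rw [simpleRefl_of_lt hi, simpleRefl_of_lt hi']
  ext ⟨x, hx⟩
  simp only [Equiv.Perm.mul_apply, Equiv.swap_apply_def, Fin.ext_iff, apply_ite Fin.val]
  split_ifs <;> omega

lemma simpleRefl_inv (n j : ℕ) : (simpleRefl n j)⁻¹ = simpleRefl n j :=
  inv_eq_of_mul_eq_one_right (simpleRefl_mul_self n j)

lemma simpleRefl_apply_left {n j : ℕ} (hj : j + 1 < n) :
    simpleRefl n j ⟨j, Nat.lt_of_succ_lt hj⟩ = ⟨j + 1, hj⟩ := by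
  simp [simpleRefl_of_lt hj]

lemma simpleRefl_apply_right {n j : ℕ} (hj : j + 1 < n) :
    simpleRefl n j ⟨j + 1, hj⟩ = ⟨j, Nat.lt_of_succ_lt hj⟩ := by
  simp [simpleRefl_of_lt hj]

lemma simpleRefl_apply_ne {n j k : ℕ} (hj : j + 1 < n) (hk : k < n) (h1 : k ≠ j)
    (h2 : k ≠ j + 1) : simpleRefl n j ⟨k, hk⟩ = ⟨k, hk⟩ := by
  rw [simpleRefl_of_lt hj, Equiv.swap_apply_of_ne_of_ne] <;> simpa

/-- The key step in the independence of the reduced word. -/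
lemma matsumoto_step {n : ℕ} {w : Equiv.Perm (Fin n)} {i j : ℕ} {l l' : List ℕ}
    (IH : ∀ u, len n u < len n w → ∀ m m', IsReducedWord n u m → IsReducedWord n u m' →
      demWord n m = demWord n m')
    (h : IsReducedWord n w (i :: l)) (h' : IsReducedWord n w (j :: l')) (hij : i < j) :
    demWord n (i :: l) = demWord n (j :: l') := by
  obtain ⟨hl, hwi, hi⟩ := h.tail
  obtain ⟨hl', hwj, hj⟩ := h'.tail
  have di := desc_of_len hi w hwi
  have dj := desc_of_len hj w hwj
  rcases (show i + 1 < j ∨ j = i + 1 by omega) with hc | rfl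
  · have hcomm := simpleRefl_comm hi hj hc
    have e1 : len n (simpleRefl n i * w) =
        len n (simpleRefl n j * (simpleRefl n i * w)) + 1 := by
      apply len_simple_mul_down hj
      rw [mul_inv_rev, simpleRefl_inv, Equiv.Perm.mul_apply, Equiv.Perm.mul_apply,
        simpleRefl_apply_ne hi _ (by omega) (by omega),
        simpleRefl_apply_ne hi _ (by omega) (by omega)]
      exact dj
    have e3 : simpleRefl n j * (simpleRefl n i * w) = simpleRefl n i * (simpleRefl n j * w) := by
      rw [← mul_assoc, ← hcomm, mul_assoc]
    obtain ⟨m, hm⟩ := exists_reducedWord n (simpleRefl n j * (simpleRefl n i * w))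
    have r1 := hm.cons e1
    have r2 : IsReducedWord n (simpleRefl n j * w) (i :: m) := by
      rw [e3] at hm
      refine hm.cons ?_
      rw [← e3]; omega
    have q1 := IH _ (by omega) _ _ hl r1
    have q2 := IH _ (by omega) _ _ hl' r2
    funext f
    have q1f := congrFun q1 f
    have q2f := congrFun q2 f
    simp only [demWord, List.foldr_cons] at q1f q2f ⊢
    rw [q1f, q2f, demX_comm hi hj hc]
  · have hbr := simpleRefl_braid hj
    have e1 : len n (simpleRefl n i * w) =
        len n (simpleRefl n (i + 1) * (simpleRefl n i * w)) + 1 := by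
      apply len_simple_mul_down hj
      rw [mul_inv_rev, simpleRefl_inv, Equiv.Perm.mul_apply, Equiv.Perm.mul_apply,
        simpleRefl_apply_ne hi _ (by omega) (by omega), simpleRefl_apply_right hi]
      exact dj.trans di
    have e2 : len n (simpleRefl n (i + 1) * (simpleRefl n i * w)) =
        len n (simpleRefl n i * (simpleRefl n (i + 1) * (simpleRefl n i * w))) + 1 := by
      apply len_simple_mul_down hi
      simp only [mul_inv_rev, simpleRefl_inv, Equiv.Perm.mul_apply]
      rw [simpleRefl_apply_left hj, simpleRefl_apply_ne hj _ (by omega) (by omega),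
        simpleRefl_apply_ne hi _ (by omega) (by omega), simpleRefl_apply_left hi]
      exact dj
    have f1 : len n (simpleRefl n (i + 1) * w) =
        len n (simpleRefl n i * (simpleRefl n (i + 1) * w)) + 1 := by
      apply len_simple_mul_down hi
      rw [mul_inv_rev, simpleRefl_inv, Equiv.Perm.mul_apply, Equiv.Perm.mul_apply,
        simpleRefl_apply_left hj, simpleRefl_apply_ne hj _ (by omega) (by omega)]
      exact dj.trans di
    have f2 : len n (simpleRefl n i * (simpleRefl n (i + 1) * w)) =
        len n (simpleRefl n (i + 1) * (simpleRefl n i * (simpleRefl n (i + 1) * w))) + 1 := by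
      apply len_simple_mul_down hj
      simp only [mul_inv_rev, simpleRefl_inv, Equiv.Perm.mul_apply]
      rw [simpleRefl_apply_right hi, simpleRefl_apply_ne hi _ (by omega) (by omega),
        simpleRefl_apply_right hj, simpleRefl_apply_ne hj _ (by omega) (by omega)]
      exact di
    have e3 : simpleRefl n i * (simpleRefl n (i + 1) * (simpleRefl n i * w)) =
        simpleRefl n (i + 1) * (simpleRefl n i * (simpleRefl n (i + 1) * w)) := by
      simp only [← mul_assoc]; rw [hbr]
    obtain ⟨m, hm⟩ := exists_reducedWord n
      (simpleRefl n i * (simpleRefl n (i + 1) * (simpleRefl n i * w)))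
    have r1 := (hm.cons e2).cons e1
    rw [e3] at hm
    have r2 := (hm.cons f2).cons f1
    have q1 := IH _ (by omega) _ _ hl r1
    have q2 := IH _ (by omega) _ _ hl' r2
    funext f
    have q1f := congrFun q1 f
    have q2f := congrFun q2 f
    simp only [demWord, List.foldr_cons] at q1f q2f ⊢
    rw [q1f, q2f, demX_braid hj]

lemma demWord_eq_of_reduced {n : ℕ} {w : Equiv.Perm (Fin n)} {l l' : List ℕ}
    (h : IsReducedWord n w l) (h' : IsReducedWord n w l') : demWord n l = demWord n l' := by
  induction hk : len n w using Nat.strong_induction_on generalizing w l l' with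
  | _ k IH =>
    have IH' : ∀ u, len n u < len n w → ∀ m m', IsReducedWord n u m → IsReducedWord n u m' →
      demWord n m = demWord n m' := fun u hu m m' hm hm' =>
        IH (len n u) (by omega) hm hm' rfl
    match l, l', h, h' with
    | [], [], _, _ => rfl
    | [], j :: l', h, h' =>
      have h1 := h.2
      have h2 := h'.2
      simp at h1 h2; omega
    | i :: l, [], h, h' =>
      have h1 := h.2
      have h2 := h'.2
      simp at h1 h2; omega
    | i :: l, j :: l', h, h' =>
      rcases lt_trichotomy i j with hij | rfl | hij
      · exact matsumoto_step IH' h h' hij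
      · have := IH' _ (by have := h.tail.2.1; omega) _ _ h.tail.1 h'.tail.1
        funext f
        have qf := congrFun this f
        simp only [demWord, List.foldr_cons] at qf ⊢
        rw [qf]
      · exact (matsumoto_step IH' h' h hij).symm

lemma dem_eq_demWord {n : ℕ} {w : Equiv.Perm (Fin n)} {l : List ℕ} (h : IsReducedWord n w l) :
    dem n w = demWord n l := by
  have hex : ∃ l, IsReducedWord n w l := ⟨l, h⟩
  unfold dem
  rw [dif_pos hex]
  exact demWord_eq_of_reduced hex.choose_spec h

lemma demX_zero (n j : ℕ) : demX n j 0 = 0 := by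
  have := demX_add n j 0 0
  simpa using this

lemma demWord_add (n : ℕ) (l : List ℕ) (f g : R n) :
    demWord n l (f + g) = demWord n l f + demWord n l g := by
  induction l with
  | nil => rfl
  | cons i l ih =>
    simp only [demWord, List.foldr_cons] at ih ⊢
    rw [ih, demX_add]

lemma demWord_smul (n : ℕ) (l : List ℕ) (c : Ssub n) (f : R n) :
    demWord n l (c • f) = c • demWord n l f := by
  induction l with
  | nil => rfl
  | cons i l ih =>
    simp only [demWord, List.foldr_cons] at ih ⊢
    rw [ih, demX_smul]

/-- `∂_w` as a linear map over symmetric polynomials. -/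
def demL (n : ℕ) (w : Equiv.Perm (Fin n)) : R n →ₗ[Ssub n] R n where
  toFun := dem n w
  map_add' f g := by
    obtain ⟨l, hl⟩ := exists_reducedWord n w
    rw [dem_eq_demWord hl, demWord_add]
  map_smul' c f := by
    obtain ⟨l, hl⟩ := exists_reducedWord n w
    rw [dem_eq_demWord hl, demWord_smul]; rfl

lemma demL_apply (n : ℕ) (w : Equiv.Perm (Fin n)) (f : R n) : demL n w f = dem n w f := rfl

lemma demWord_cases (n : ℕ) (l : List ℕ) :
    IsReducedWord n (l.map (simpleRefl n)).prod l ∨ ∀ f, demWord n l f = 0 := by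
  induction l with
  | nil => left; simp [IsReducedWord, len_one]
  | cons i l ih =>
    rcases ih with ih | ih
    · by_cases hi : i + 1 < n
      · rcases lt_or_lt_desc hi (l.map (simpleRefl n)).prod with h | h
        · left
          refine ⟨rfl, ?_⟩
          simp only [List.map_cons, List.prod_cons, List.length_cons]
          rw [len_simple_mul_up hi _ h, ih.2]
        · right
          intro f
          have e := len_simple_mul_down hi _ h
          obtain ⟨m, hm⟩ := exists_reducedWord n (simpleRefl n i * (l.map (simpleRefl n)).prod)
          have q := congrFun (demWord_eq_of_reduced ih (hm.cons e)) f
          simp only [demWord, List.foldr_cons] at q ⊢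
          rw [q, demX_demX]
      · right
        intro f
        simp only [demWord, List.foldr_cons]
        exact demX_of_not_lt hi _
    · right
      intro f
      have := ih f
      simp only [demWord, List.foldr_cons] at this ⊢
      rw [this, demX_zero]

lemma demWord_append (n : ℕ) (l m : List ℕ) (f : R n) :
    demWord n (l ++ m) f = demWord n l (demWord n m f) := by
  simp [demWord, List.foldr_append]

lemma dem_mul (n : ℕ) (u v : Equiv.Perm (Fin n)) (f : R n) :
    dem n u (dem n v f) = if len n (u * v) = len n u + len n v then dem n (u * v) f else 0 := by
  obtain ⟨l, hl⟩ := exists_reducedWord n u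
  obtain ⟨m, hm⟩ := exists_reducedWord n v
  rw [dem_eq_demWord hl, dem_eq_demWord hm, ← demWord_append]
  have hprod : ((l ++ m).map (simpleRefl n)).prod = u * v := by
    rw [List.map_append, List.prod_append, hl.1, hm.1]
  have hlen : (l ++ m).length = len n u + len n v := by
    rw [List.length_append, hl.2, hm.2]
  split_ifs with h
  · rw [dem_eq_demWord (w := u * v) (l := l ++ m) ⟨hprod, by rw [hlen, h]⟩]
  · rcases demWord_cases n (l ++ m) with h1 | h1
    · exfalso; apply h
      rw [← hlen, h1.2, hprod]
    · exact h1 f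

lemma dem_one (n : ℕ) (f : R n) : dem n 1 f = f := by
  have : IsReducedWord n (1 : Equiv.Perm (Fin n)) [] := by simp [IsReducedWord, len_one]
  rw [dem_eq_demWord this]; rfl

lemma dem_simple {n j : ℕ} (hj : j + 1 < n) (f : R n) :
    dem n (simpleRefl n j) f = demX n j f := by
  have h1 := len_simple_mul_up hj (1 : Equiv.Perm (Fin n)) (by simp)
  have : IsReducedWord n (simpleRefl n j) [j] := by
    refine ⟨by simp, ?_⟩
    rw [mul_one, len_one] at h1
    simp [h1]
  rw [dem_eq_demWord this]; rfl

/-! ### `∂_{w₀}` of the staircase -/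

lemma demX_monomial {n j : ℕ} (hj : j + 1 < n) (lam lam' : ℕ → ℕ)
    (h : ∀ k, lam k = lam' k + if k = j then 1 else 0) (h' : lam' j = lam' (j + 1)) :
    demX n j (∏ i : Fin n, X i ^ lam i) = ∏ i : Fin n, X i ^ lam' i := by
  set a : Fin n := ⟨j, Nat.lt_of_succ_lt hj⟩ with ha
  set b : Fin n := ⟨j + 1, hj⟩ with hb
  have hM : (∏ i : Fin n, X i ^ lam i : R n) = X a * ∏ i : Fin n, X i ^ lam' i := by
    have : ∀ i : Fin n, (X i ^ lam i : R n) = (if i = a then X i else 1) * X i ^ lam' i := by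
      intro i
      rw [h, pow_add, mul_comm]
      congr 1
      by_cases hia : i = a
      · simp [hia, ha]
      · have : (i : ℕ) ≠ j := fun h => hia (Fin.ext h)
        simp [hia, this]
    rw [Finset.prod_congr rfl fun i _ => this i, Finset.prod_mul_distrib]
    simp
  have hS : rename (Equiv.swap a b) (∏ i : Fin n, X i ^ lam' i : R n) =
      ∏ i : Fin n, X i ^ lam' i := by
    rw [map_prod, ← Equiv.prod_comp (Equiv.swap a b)]
    refine Finset.prod_congr rfl fun i _ => ?_
    rw [map_pow, rename_X, Equiv.swap_apply_self]
    congr 1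
    rw [Equiv.swap_apply_def]
    split_ifs with h1 h2
    · rw [h1]; exact h'.symm
    · rw [h2]; exact h'
    · rfl
  apply demX_eq_of hj
  rw [hM, map_mul, hS, rename_X, Equiv.swap_apply_left]
  ring

lemma exists_word_monomial (n : ℕ) (k : ℕ) (lam : ℕ → ℕ)
    (h1 : ∀ k, lam k = lam (k + 1) ∨ lam k = lam (k + 1) + 1)
    (h0 : ∀ k, n ≤ k + 1 → lam k = 0) (hk : ∑ i : Fin n, lam i = k) :
    ∃ l : List ℕ, l.length = k ∧ demWord n l (∏ i : Fin n, X i ^ lam i) = 1 := by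
  induction k generalizing lam with
  | zero =>
    refine ⟨[], rfl, ?_⟩
    have : ∀ i : Fin n, lam i = 0 := by
      intro i
      exact (Finset.sum_eq_zero_iff.mp hk) i (Finset.mem_univ i)
    simp [demWord, this]
  | succ k ih =>
    have hex : ∃ j, lam j = lam (j + 1) + 1 := by
      by_contra hcon
      push Not at hcon
      have hc : ∀ j, lam j = lam (j + 1) := fun j => (h1 j).resolve_right (hcon j)
      have hc' : ∀ j, lam j = lam 0 := by
        intro j
        induction j with
        | zero => rfl
        | succ j ih => rw [← hc, ih]
      have : ∀ j, lam j = 0 := fun j => by rw [hc', ← hc' n, h0 n (by omega)]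
      simp [this] at hk
    classical
    obtain ⟨j, hj, hmin⟩ : ∃ j, lam j = lam (j + 1) + 1 ∧ ∀ m < j, lam m ≠ lam (m + 1) + 1 :=
      ⟨Nat.find hex, Nat.find_spec hex, fun m hm => Nat.find_min hex hm⟩
    have hjn : j + 1 < n := by
      by_contra hcon
      have := h0 j (by omega)
      omega
    let lam' : ℕ → ℕ := fun m => if m = j then lam (j + 1) else lam m
    have e : ∀ m, lam m = lam' m + if m = j then 1 else 0 := by
      intro m
      by_cases hm : m = j
      · simp [lam', hm, hj]
      · simp [lam', hm]
    have e' : lam' j = lam' (j + 1) := by simp [lam']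
    have hsum : ∑ i : Fin n, lam' i = k := by
      have : ∑ i : Fin n, lam i = ∑ i : Fin n, lam' i + 1 := by
        rw [Finset.sum_congr rfl fun (i : Fin n) _ => e i, Finset.sum_add_distrib]
        congr 1
        have : ∀ i : Fin n, (if (i : ℕ) = j then 1 else 0) =
            if i = ⟨j, Nat.lt_of_succ_lt hjn⟩ then 1 else 0 := by
          intro i; simp [Fin.ext_iff]
        simp [this]
      omega
    obtain ⟨l, hl, hl'⟩ := ih lam' (by
        intro m
        have hm := h1 m
        by_cases a1 : m = j
        · subst a1; left; exact e'
        · by_cases a2 : m + 1 = j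
          · have := hmin m (by omega)
            simp only [lam', a1, a2, if_true, if_false]
            rw [a2] at this hm
            omega
          · simpa [lam', a1, a2] using hm) (by
        intro m hm
        have := h0 m hm
        have := e m
        omega) hsum
    refine ⟨l ++ [j], by simp [hl], ?_⟩
    rw [demWord_append]
    have : demWord n [j] (∏ i : Fin n, X i ^ lam i) = ∏ i : Fin n, X i ^ lam' i :=
      demX_monomial hjn lam lam' e e'
    rw [this, hl']

lemma dem_w₀_staircase (n : ℕ) : dem n (w₀ n) (staircase n) = 1 := by
  obtain ⟨l, hl, hl'⟩ := exists_word_monomial n (len n (w₀ n)) (fun k => n - 1 - k)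
    (by intro k; omega) (by intro k hk; omega) (len_w₀ n).symm
  change demWord n l (staircase n) = 1 at hl'
  rcases demWord_cases n l with h | h
  · have hw : (l.map (simpleRefl n)).prod = w₀ n := eq_w₀_of_len (by rw [← h.2, hl])
    rw [hw] at h
    rw [dem_eq_demWord h, hl']
  · rw [h] at hl'
    exact absurd hl' zero_ne_one

/-! ### Schubert polynomials form a basis over symmetric polynomials -/

lemma dem_schubert_self (n : ℕ) (w : Equiv.Perm (Fin n)) : dem n w (schubert n w) = 1 := by
  have := len_compl n w
  unfold schubert
  rw [dem_mul, mul_inv_cancel_left, if_pos (by omega), dem_w₀_staircase]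

lemma dem_schubert_of_ne {n : ℕ} {u w : Equiv.Perm (Fin n)} (h : len n w ≤ len n u)
    (hne : u ≠ w) : dem n u (schubert n w) = 0 := by
  have h1 := len_compl n w
  have h2 := len_le_w₀ n (u * (w⁻¹ * w₀ n))
  unfold schubert
  rw [dem_mul, if_neg]
  intro h3
  have h4 : u * (w⁻¹ * w₀ n) = w₀ n := eq_w₀_of_len (by omega)
  apply hne
  rw [← mul_assoc] at h4
  exact mul_inv_eq_one.mp (mul_eq_right.mp h4)

lemma symm_of_demX {n : ℕ} {f : R n} (h : ∀ j, j + 1 < n → demX n j f = 0) : f ∈ Ssub n := by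
  have key : ∀ l : List ℕ, rename ((l.map (simpleRefl n)).prod : Equiv.Perm (Fin n)) f = f := by
    intro l
    induction l with
    | nil => simp
    | cons i l ih =>
      rw [List.map_cons, List.prod_cons, Equiv.Perm.coe_mul, ← rename_rename, ih]
      by_cases hi : i + 1 < n
      · have := demX_spec hi f
        rw [h i hi, mul_zero] at this
        rw [simpleRefl_of_lt hi]
        exact (sub_eq_zero.mp this.symm).symm
      · simp [simpleRefl_of_not_lt hi]
  intro e
  obtain ⟨l, hl⟩ := exists_reducedWord n e
  rw [← hl.1]
  exact key l

lemma mem_span_schubert (n k : ℕ) (f : R n) (h : ∀ u, k ≤ len n u → dem n u f = 0) :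
    f ∈ Submodule.span (Ssub n) (Set.range (schubert n)) := by
  induction k generalizing f with
  | zero =>
    have := h 1 (by omega)
    rw [dem_one] at this
    rw [this]; exact Submodule.zero_mem _
  | succ k ih =>
    have hsym : ∀ u, len n u = k → dem n u f ∈ Ssub n := by
      intro u hu
      apply symm_of_demX
      intro j hj
      rw [← dem_simple hj, dem_mul]
      split_ifs with h1
      · apply h
        rw [h1, hu]
        have h2 := len_simple_mul_up hj (1 : Equiv.Perm (Fin n)) (by simp)
        rw [mul_one, len_one] at h2
        omega
      · rfl
    classical
    let c : Equiv.Perm (Fin n) → Ssub n := fun u =>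
      if hu : len n u = k then ⟨dem n u f, hsym u hu⟩ else 0
    let g : R n := ∑ w, c w • schubert n w
    have hg : g ∈ Submodule.span (Ssub n) (Set.range (schubert n)) :=
      Submodule.sum_mem _ fun w _ => Submodule.smul_mem _ _ (Submodule.subset_span ⟨w, rfl⟩)
    have hfg : f - g ∈ Submodule.span (Ssub n) (Set.range (schubert n)) := by
      apply ih
      intro u hu
      have hgu : dem n u g = c u • (1 : R n) := by
        rw [← demL_apply, map_sum]
        rw [Finset.sum_eq_single u]
        · rw [map_smul, demL_apply, dem_schubert_self]
        · intro w _ hwu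
          rw [map_smul, demL_apply]
          by_cases hw : len n w = k
          · rw [dem_schubert_of_ne (by omega) hwu.symm, smul_zero]
          · simp [c, hw]
        · simp
      rw [← demL_apply, map_sub, demL_apply, demL_apply, hgu]
      by_cases hk : len n u = k
      · simp only [c, hk, dif_pos, Algebra.smul_def, mul_one]
        exact sub_self _
      · rw [h u (by omega)]
        simp [c, hk]
    have := Submodule.add_mem _ hfg hg
    simpa using this

lemma span_schubert (n : ℕ) :
    (⊤ : Submodule (Ssub n) (R n)) ≤ Submodule.span (Ssub n) (Set.range (schubert n)) := by
  intro f _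
  apply mem_span_schubert n (len n (w₀ n) + 1)
  intro u hu
  have := len_le_w₀ n u
  omega

lemma linearIndependent_schubert (n : ℕ) : LinearIndependent (Ssub n) (schubert n) := by
  rw [Fintype.linearIndependent_iff]
  intro c hc
  by_contra hcon
  push Not at hcon
  obtain ⟨u, hu, hmax⟩ := Finset.exists_max_image
    (Finset.univ.filter fun w => c w ≠ 0) (len n) (by
      obtain ⟨w, hw⟩ := hcon
      exact ⟨w, by simpa using hw⟩)
  simp only [Finset.mem_filter, Finset.mem_univ, true_and] at hu hmax
  have h := congrArg (demL n u) hc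
  rw [map_sum, map_zero, Finset.sum_eq_single u] at h
  · rw [map_smul, demL_apply, dem_schubert_self, Algebra.smul_def, mul_one] at h
    exact hu (Subtype.ext h)
  · intro w _ hwu
    rw [map_smul, demL_apply]
    by_cases hw : c w = 0
    · rw [hw, zero_smul]
    · rw [dem_schubert_of_ne (hmax w hw) hwu.symm, smul_zero]
  · simp

/-- The Schubert basis. -/
def schubertBasis (n : ℕ) : Module.Basis (Equiv.Perm (Fin n)) (Ssub n) (R n) :=
  Module.Basis.mk (linearIndependent_schubert n) (span_schubert n)

/-- The base-changed Schubert basis. -/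
def tensorBasis (n : ℕ) : Module.Basis (Equiv.Perm (Fin n)) (R n) (T n) :=
  Algebra.TensorProduct.basis (R n) (schubertBasis n)

lemma tensorBasis_apply (n : ℕ) (w : Equiv.Perm (Fin n)) :
    tensorBasis n w = (1 : R n) ⊗ₜ[Ssub n] schubert n w := by
  simp [tensorBasis, schubertBasis]

lemma one_tmul_mem (n : ℕ) (w : Equiv.Perm (Fin n)) :
    (1 : R n) ⊗ₜ[Ssub n] schubert n w ∈ Submodule.span (R n) (Set.range (Sw n)) := by
  induction hk : len n w using Nat.strong_induction_on generalizing w with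
  | _ k IH =>
    have h : Sw n w ∈ Submodule.span (R n) (Set.range (Sw n)) := Submodule.subset_span ⟨w, rfl⟩
    unfold Sw at h
    refine (Submodule.add_mem_iff_left _ ?_).mp h
    refine Submodule.sum_mem _ fun p hp => ?_
    simp only [Finset.mem_filter, Finset.mem_univ, true_and] at hp
    have := Submodule.smul_mem _ (aeval (fun i => -(X i : R n)) (schubert n p.2))
      (IH (len n p.1) (by omega) p.1 rfl)
    rwa [TensorProduct.smul_tmul', smul_eq_mul, mul_one] at this

/-- The family `{S_w}_{w ∈ S_n}` is a basis of `R ⊗_{R^{S_n}} R`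
as a free left `R`-module. -/
theorem statement4 (n : ℕ) :
    LinearIndependent (R n) (Sw n) ∧
      Submodule.span (R n) (Set.range (Sw n)) = (⊤ : Submodule (R n) (T n)) := by
  have hspan : Submodule.span (R n) (Set.range (Sw n)) = (⊤ : Submodule (R n) (T n)) := by
    rw [eq_top_iff, ← (tensorBasis n).span_eq, Submodule.span_le]
    rintro _ ⟨w, rfl⟩
    rw [tensorBasis_apply]
    exact one_tmul_mem n w
  refine ⟨?_, hspan⟩
  apply linearIndependent_of_top_le_span_of_card_eq_finrank hspan.ge
  rw [Module.finrank_eq_card_basis (tensorBasis n)]
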